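/- For every k with 1 ≤ k ≤ n, the following identity (relation R̃_k) holds in F_q[x_1,…,x_n,y_1,…,y_n]: ( Σ_{i=0}^{k−1} Σ_{j=0}^{n−k} (−1)^{i+j} c_{k−1,i} · c*_{n−k,j} · u_{i−j}^{q^{min(i,j)}} )^{q−1} = f̃_k · f̃*_{n+1−k}. -/

import Mathlib

open MvPolynomial

variable (F : Type) [Field F] [Fintype F] (n : ℕ)

/-- `fX F n k` is the orbit product `f_k` (1-indexed, meaningful for `1 ≤ k ≤ n`). -/
noncomputable def fX (k : ℕ) : MvPolynomial (Fin n ⊕ Fin n) F :=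
  if h : 1 ≤ k ∧ k ≤ n then
    ∏ α : Fin (k - 1) → F,
      (X (Sum.inl ⟨k - 1, by omega⟩) +
        ∑ j : Fin (k - 1), C (α j) * X (Sum.inl ⟨j.val, by omega⟩))
  else 0

/-- `fY F n k` is `f_k^*` (1-indexed), the orbit product of `y_{n+1-k}`. -/
noncomputable def fY (k : ℕ) : MvPolynomial (Fin n ⊕ Fin n) F :=
  if h : 1 ≤ k ∧ k ≤ n then
    ∏ α : Fin (k - 1) → F,
      (X (Sum.inr ⟨n - k, by omega⟩) +
        ∑ j : Fin (k - 1), C (α j) * X (Sum.inr ⟨n - 1 - j.val, by omega⟩))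
  else 0

/-- `uInv F n j` is the invariant `u_j`, for `j : ℤ`. -/
noncomputable def uInv (j : ℤ) : MvPolynomial (Fin n ⊕ Fin n) F :=
  if 0 ≤ j then ∑ k : Fin n, X (Sum.inl k) ^ (Fintype.card F) ^ j.toNat * X (Sum.inr k)
  else ∑ k : Fin n, X (Sum.inl k) * X (Sum.inr k) ^ (Fintype.card F) ^ (-j).toNat

/-- `cX F n s t` is the Dickson-type invariant `c_{s,t}` (in the `x`-variables):
the sum over strictly increasing sequences `1 ≤ j_1 < ⋯ < j_{s-t} ≤ s` (encoded as
strictly monotone functions `Fin (s-t) → Fin s`) of `∏_l f_{j_l}^{(q-1)·q^{t+l-j_l}}`. -/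
noncomputable def cX (s t : ℕ) : MvPolynomial (Fin n ⊕ Fin n) F :=
  if s ≤ n then
    ∑ g ∈ Finset.univ.filter (fun g : Fin (s - t) → Fin s => ∀ a b : Fin (s - t), a < b → g a < g b),
      ∏ l : Fin (s - t),
        fX F n ((g l).val + 1) ^ ((Fintype.card F - 1) * (Fintype.card F) ^ (t + l.val - (g l).val))
  else 0

/-- `cY F n s t` is `c_{s,t}^*` (in the `y`-variables). -/
noncomputable def cY (s t : ℕ) : MvPolynomial (Fin n ⊕ Fin n) F :=
  if s ≤ n then
    ∑ g ∈ Finset.univ.filter (fun g : Fin (s - t) → Fin s => ∀ a b : Fin (s - t), a < b → g a < g b),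
      ∏ l : Fin (s - t),
        fY F n ((g l).val + 1) ^ ((Fintype.card F - 1) * (Fintype.card F) ^ (t + l.val - (g l).val))
  else 0

/-!
For a sequence `z` in a `K`-algebra, with `q = |K|`, the orbit product
`L_s(x) = ∏ (x + α_0 z_0 + ⋯ + α_{s-1} z_{s-1})` is `K`-linear in `x` and satisfies Ore's recursion
`L_{s+1}(x) = L_s(x)^q - L_s(z_s)^(q-1) L_s(x)`. The recursion matches the splitting of the sum
`c_{s+1,t+1}` by whether its last index is `s + 1`, so `∑ (-1)^t c_{s,t} x^(q^t) = (-1)^s L_s(x)`.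
Since `u_{i-j}^(q^min(i,j)) = ∑_m x_m^(q^i) y_m^(q^j)`, the double sum of the theorem factors as
`± ∑_m L_{k-1}(x_m) L*_{n-k}(y_m)`. Here `L_{k-1}` kills `x_m` for `m < k` and `L*_{n-k}` kills
`y_m` for `m > k`, so only `± f_k f*_{n+1-k}` survives, and the sign disappears in the power
`q - 1`.
-/

section Frobenius

variable {K R : Type*} [Field K] [Fintype K] [CommRing R] [Algebra K R]

theorem sum_pow_card {ι : Type*} (s : Finset ι) (f : ι → R) :
    (∑ i ∈ s, f i) ^ Fintype.card K = ∑ i ∈ s, f i ^ Fintype.card K :=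
  map_sum (FiniteField.frobeniusAlgHom K R) f s

theorem sum_pow_card_pow {ι : Type*} (s : Finset ι) (f : ι → R) (m : ℕ) :
    (∑ i ∈ s, f i) ^ Fintype.card K ^ m = ∑ i ∈ s, f i ^ Fintype.card K ^ m := by
  simpa only [AlgHom.coe_pow, FiniteField.coe_frobeniusAlgHom, pow_iterate] using
    map_sum (FiniteField.frobeniusAlgHom K R ^ m) f s

variable (K R)

theorem neg_one_pow_card : (-1 : R) ^ Fintype.card K = -1 := by
  simpa using map_neg (FiniteField.frobeniusAlgHom K R) 1

theorem neg_one_pow_card_sub_one : (-1 : R) ^ (Fintype.card K - 1) = 1 := by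
  have h := FiniteField.pow_card_sub_one_eq_one (-1 : K) (neg_ne_zero.2 one_ne_zero)
  simpa using congrArg (algebraMap K R) h

theorem prod_X_add_C_eq_X_pow_card_sub_X :
    ∏ a : K, (Polynomial.X + Polynomial.C a) = Polynomial.X ^ Fintype.card K - Polynomial.X := by
  have hq : 1 < Fintype.card K := Fintype.one_lt_card
  have hroots := Polynomial.prod_multiset_X_sub_C_of_monic_of_roots_card_eq
    (p := (Polynomial.X ^ Fintype.card K - Polynomial.X : Polynomial K))
    (Polynomial.monic_X_pow_sub (by simpa using hq))
    (by rw [FiniteField.roots_X_pow_card_sub_X, FiniteField.X_pow_card_sub_X_natDegree_eq K hq,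
      Finset.card_val, Finset.card_univ])
  rw [FiniteField.roots_X_pow_card_sub_X] at hroots
  rw [← Equiv.prod_comp (Equiv.neg K), ← hroots]
  simp only [Equiv.neg_apply, map_neg, ← sub_eq_add_neg]
  rfl

variable {R}

-- Homogenizing `∏ (T + a) = T^q - T` avoids dividing by `y`.
theorem prod_add_smul (x y : R) :
    ∏ a : K, (x + a • y) = x ^ Fintype.card K - y ^ (Fintype.card K - 1) * x := by
  have hq : 1 ≤ Fintype.card K := Fintype.card_pos
  have hom := congrArg (Polynomial.homogenize · (∑ _a : K, 1)) (prod_X_add_C_eq_X_pow_card_sub_X K)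
  rw [Polynomial.homogenize_finsetProd fun a _ => (Polynomial.natDegree_X_add_C a).le] at hom
  simpa [hq, MvPolynomial.algebraMap_eq, Algebra.smul_def, mul_comm] using
    congrArg (MvPolynomial.aeval ![x, y]) hom

end Frobenius

section OrbitMap

variable (K : Type*) {R : Type*} [Field K] [Fintype K] [CommRing R] [Algebra K R]

/-- The orbit product `x ↦ ∏ (x + v)`, where `v` runs over the combinations
`α_0 z_0 + ⋯ + α_{s-1} z_{s-1}` with `α_j ∈ K`. It is defined by Ore's recursion, which makes it
visibly `K`-linear; `orbitMap_eq_prod` recovers the product. -/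
noncomputable def orbitMap (z : ℕ → R) : ℕ → R →ₗ[K] R
  | 0 => LinearMap.id
  | s + 1 => (FiniteField.frobeniusAlgHom K R).toLinearMap ∘ₗ orbitMap z s -
      orbitMap z s (z s) ^ (Fintype.card K - 1) • orbitMap z s

theorem orbitMap_succ (z : ℕ → R) (s : ℕ) (x : R) :
    orbitMap K z (s + 1) x = orbitMap K z s x ^ Fintype.card K -
      orbitMap K z s (z s) ^ (Fintype.card K - 1) * orbitMap K z s x :=
  rfl

theorem orbitMap_eq_prod (z : ℕ → R) (s : ℕ) (x : R) :
    orbitMap K z s x = ∏ α : Fin s → K, (x + ∑ j, α j • z j) := by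
  induction s generalizing x with
  | zero => simp [orbitMap]
  | succ s ih =>
    calc orbitMap K z (s + 1) x
        = ∏ a : K, orbitMap K z s (x + a • z s) := by
          simp only [map_add, map_smul, prod_add_smul, orbitMap_succ]
      _ = ∏ a : K, ∏ α : Fin s → K, (x + a • z s + ∑ j, α j • z j) := by simp only [ih]
      _ = ∏ α : Fin (s + 1) → K, (x + ∑ j, α j • z j) := by
          rw [← Equiv.prod_comp (Fin.snocEquiv fun _ => K), Fintype.prod_prod_type]
          simp [Fin.snocEquiv, Fin.sum_univ_castSucc, add_assoc, add_comm]

theorem orbitMap_eq_zero (z : ℕ → R) {s j : ℕ} (hj : j < s) : orbitMap K z s (z j) = 0 := by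
  rw [orbitMap_eq_prod]
  refine Finset.prod_eq_zero (Finset.mem_univ (Pi.single ⟨j, hj⟩ (-1))) ?_
  simp [Pi.single_apply]

end OrbitMap

section StrictMonoMaps

/-- The strictly monotone maps `Fin m → Fin s`, that is, the sequences
`j_1 < ⋯ < j_m` indexing the sum that defines the coefficients `c_{s,t}`. -/
def strictMonoMaps (m s : ℕ) : Finset (Fin m → Fin s) :=
  Finset.univ.filter fun g => ∀ a b : Fin m, a < b → g a < g b

variable {m s : ℕ}

theorem mem_strictMonoMaps {g : Fin m → Fin s} : g ∈ strictMonoMaps m s ↔ StrictMono g := by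
  simp [strictMonoMaps, StrictMono]

theorem strictMonoMaps_eq_empty (h : s < m) : strictMonoMaps m s = ∅ := by
  refine Finset.eq_empty_of_forall_notMem fun g hg => h.not_ge ?_
  simpa using Fintype.card_le_of_injective g (mem_strictMonoMaps.1 hg).injective

theorem val_add_le_of_strictMono {g : Fin m → Fin s} (hg : StrictMono g) (l : Fin m) :
    (g l).val + m ≤ s + l.val := by
  have hcard := Finset.card_le_card_of_injOn (s := Finset.Ioi l) (t := Finset.Ioi (g l)) g
    (fun a ha => by simpa using hg (by simpa using ha)) hg.injective.injOn
  simp only [Fin.card_Ioi] at hcard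
  omega

theorem strictMono_snoc_last {g : Fin m → Fin s} :
    StrictMono (Fin.snoc (α := fun _ => Fin (s + 1)) (Fin.castSucc ∘ g) (Fin.last s)) ↔
      StrictMono g := by
  rw [← Fin.insertNth_last', Fin.strictMono_insertNth_iff]
  simp [Fin.castSucc_lt_last, (Fin.castSucc_lt_last _).not_ge, StrictMono]

theorem exists_eq_castSucc_comp {h : Fin m → Fin (s + 1)} (hne : ∀ l, h l ≠ Fin.last s) :
    ∃ g : Fin m → Fin s, Fin.castSucc ∘ g = h :=
  ⟨fun l => (h l).castPred (hne l), by ext; simp⟩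

theorem strictMonoMaps_succ_succ :
    strictMonoMaps (m + 1) (s + 1) =
      (strictMonoMaps (m + 1) s).image (Fin.castSucc ∘ ·) ∪
        (strictMonoMaps m s).image
          (fun g => Fin.snoc (α := fun _ => Fin (s + 1)) (Fin.castSucc ∘ g) (Fin.last s)) := by
  ext h
  simp only [Finset.mem_union, Finset.mem_image, mem_strictMonoMaps]
  constructor
  · intro hh
    have hinit (l : Fin m) : h l.castSucc ≠ Fin.last s :=
      ((hh (Fin.castSucc_lt_last l)).trans_le (Fin.le_last _)).ne
    by_cases hlast : h (Fin.last m) = Fin.last s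
    · obtain ⟨g, hg⟩ := exists_eq_castSucc_comp hinit
      have hsnoc : Fin.snoc (α := fun _ => Fin (s + 1)) (Fin.castSucc ∘ g) (Fin.last s) = h := by
        rw [hg, ← hlast]
        exact Fin.snoc_init_self h
      exact .inr ⟨g, strictMono_snoc_last.1 (hsnoc ▸ hh), hsnoc⟩
    · obtain ⟨g, rfl⟩ := exists_eq_castSucc_comp (Fin.lastCases hlast hinit)
      exact .inl ⟨g, fun a b hab => by simpa using hh hab, rfl⟩
  · rintro (⟨g, hg, rfl⟩ | ⟨g, hg, rfl⟩)
    · exact Fin.strictMono_castSucc.comp hg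
    · exact strictMono_snoc_last.2 hg

theorem sum_strictMonoMaps_succ_succ {M : Type*} [AddCommMonoid M]
    (φ : (Fin (m + 1) → Fin (s + 1)) → M) :
    ∑ g ∈ strictMonoMaps (m + 1) (s + 1), φ g =
      ∑ g ∈ strictMonoMaps (m + 1) s, φ (Fin.castSucc ∘ g) +
        ∑ g ∈ strictMonoMaps m s, φ (Fin.snoc (Fin.castSucc ∘ g) (Fin.last s)) := by
  rw [strictMonoMaps_succ_succ, Finset.sum_union, Finset.sum_image, Finset.sum_image]
  · intro g _ g' _ h
    exact (Fin.castSucc_injective s).comp_left (Fin.snoc_injective2 h).1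
  · exact (Fin.castSucc_injective s).comp_left.injOn
  · simp only [Finset.disjoint_left, Finset.mem_image, not_exists, not_and]
    rintro _ ⟨g, -, rfl⟩ g' - h
    simpa using (congrFun h (Fin.last m)).symm

end StrictMonoMaps

section DicksonCoeff

/-- The Dickson coefficient `c_{s,t}` built from a sequence `f_1, f_2, …`, encoded as
`f 0, f 1, …`; it is meaningful for `t ≤ s`. -/
def dicksonCoeff {R : Type*} [CommSemiring R] (q : ℕ) (f : ℕ → R) (s t : ℕ) : R :=
  ∑ g ∈ strictMonoMaps (s - t) s, ∏ l, f (g l) ^ ((q - 1) * q ^ (t + l.val - (g l).val))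

theorem dicksonCoeff_self {R : Type*} [CommSemiring R] (q : ℕ) (f : ℕ → R) (s : ℕ) :
    dicksonCoeff q f s s = 1 := by
  unfold dicksonCoeff
  rw [Nat.sub_self]
  simp [strictMonoMaps]

theorem dicksonCoeff_succ_zero {R : Type*} [CommSemiring R] (q : ℕ) (f : ℕ → R) (s : ℕ) :
    dicksonCoeff q f (s + 1) 0 = f s ^ (q - 1) * dicksonCoeff q f s 0 := by
  simp only [dicksonCoeff, Nat.sub_zero]
  rw [sum_strictMonoMaps_succ_succ, strictMonoMaps_eq_empty s.lt_succ_self, Finset.sum_empty,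
    zero_add, Finset.mul_sum]
  simp [Fin.prod_univ_castSucc, mul_comm]

variable (K : Type*) {R : Type*} [Field K] [Fintype K] [CommRing R] [Algebra K R]

theorem dicksonCoeff_pow_card (f : ℕ → R) {s t : ℕ} (h : t ≤ s) :
    dicksonCoeff (Fintype.card K) f s t ^ Fintype.card K =
      ∑ g ∈ strictMonoMaps (s - t) s, ∏ l,
        f (g l) ^ ((Fintype.card K - 1) * Fintype.card K ^ (t + 1 + l.val - (g l).val)) := by
  rw [dicksonCoeff, sum_pow_card]
  refine Finset.sum_congr rfl fun g hg => ?_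
  rw [← Finset.prod_pow]
  refine Finset.prod_congr rfl fun l _ => ?_
  have hval := val_add_le_of_strictMono (mem_strictMonoMaps.1 hg) l
  have hexp : t + 1 + l.val - (g l).val = t + l.val - (g l).val + 1 := by omega
  rw [← pow_mul, mul_assoc, ← pow_succ, hexp]

theorem dicksonCoeff_succ_succ (f : ℕ → R) {s t : ℕ} (h : t < s) :
    dicksonCoeff (Fintype.card K) f (s + 1) (t + 1) =
      dicksonCoeff (Fintype.card K) f s t ^ Fintype.card K +
        f s ^ (Fintype.card K - 1) * dicksonCoeff (Fintype.card K) f s (t + 1) := by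
  have hlen : s - t = s - (t + 1) + 1 := by omega
  have hlen' : s + 1 - (t + 1) = s - (t + 1) + 1 := by omega
  have hexp : t + 1 + (s - (t + 1)) - s = 0 := by omega
  rw [dicksonCoeff_pow_card K f h.le]
  simp only [dicksonCoeff]
  rw [hlen', hlen, sum_strictMonoMaps_succ_succ, Finset.mul_sum]
  simp [Fin.prod_univ_castSucc, hexp, mul_comm]

theorem sum_dicksonCoeff_succ (f : ℕ → R) (s : ℕ) (x : R) :
    ∑ t ∈ Finset.range (s + 2),
        (-1) ^ t * dicksonCoeff (Fintype.card K) f (s + 1) t * x ^ Fintype.card K ^ t =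
      f s ^ (Fintype.card K - 1) * ∑ t ∈ Finset.range (s + 1),
        (-1) ^ t * dicksonCoeff (Fintype.card K) f s t * x ^ Fintype.card K ^ t -
      (∑ t ∈ Finset.range (s + 1),
        (-1) ^ t * dicksonCoeff (Fintype.card K) f s t * x ^ Fintype.card K ^ t) ^
          Fintype.card K := by
  have hfrob (t : ℕ) :
      ((-1) ^ t * dicksonCoeff (Fintype.card K) f s t * x ^ Fintype.card K ^ t) ^ Fintype.card K =
        (-1) ^ t * dicksonCoeff (Fintype.card K) f s t ^ Fintype.card K *
          x ^ Fintype.card K ^ (t + 1) := by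
    rw [mul_pow, mul_pow, pow_right_comm, neg_one_pow_card, ← pow_mul x, ← pow_succ]
  have hstep : ∀ t ∈ Finset.range s,
      (-1) ^ (t + 1) * dicksonCoeff (Fintype.card K) f (s + 1) (t + 1) *
          x ^ Fintype.card K ^ (t + 1) =
        f s ^ (Fintype.card K - 1) * ((-1) ^ (t + 1) * dicksonCoeff (Fintype.card K) f s (t + 1) *
          x ^ Fintype.card K ^ (t + 1)) -
        (-1) ^ t * dicksonCoeff (Fintype.card K) f s t ^ Fintype.card K *
          x ^ Fintype.card K ^ (t + 1) := by
    intro t ht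
    rw [dicksonCoeff_succ_succ K f (Finset.mem_range.1 ht)]
    ring
  rw [sum_pow_card, Finset.sum_congr rfl fun t _ => hfrob t, Finset.sum_range_succ',
    Finset.sum_range_succ, Finset.sum_congr rfl hstep, Finset.sum_sub_distrib, ← Finset.mul_sum,
    Finset.sum_range_succ' _ s, Finset.sum_range_succ _ s, dicksonCoeff_succ_zero]
  simp only [dicksonCoeff_self]
  ring

theorem sum_dicksonCoeff_mul_pow (z : ℕ → R) (s : ℕ) (x : R) :
    ∑ t ∈ Finset.range (s + 1), (-1) ^ t *
        dicksonCoeff (Fintype.card K) (fun j => orbitMap K z j (z j)) s t *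
        x ^ Fintype.card K ^ t =
      (-1) ^ s * orbitMap K z s x := by
  induction s with
  | zero => simp [orbitMap, dicksonCoeff_self]
  | succ s ih =>
    rw [sum_dicksonCoeff_succ, ih, orbitMap_succ, mul_pow, pow_right_comm, neg_one_pow_card]
    ring

end DicksonCoeff

section Coordinates

/-- The coordinates `x_1, …, x_n` as a sequence starting at index `0`, extended by `0`. -/
noncomputable def xSeq (A : Type*) [CommSemiring A] (n j : ℕ) : MvPolynomial (Fin n ⊕ Fin n) A :=
  if h : j < n then X (Sum.inl ⟨j, h⟩) else 0

/-- The coordinates `y_n, …, y_1`, in the order in which they enter the `f_i^*`, as a sequence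
starting at index `0`, extended by `0`. -/
noncomputable def ySeq (A : Type*) [CommSemiring A] (n j : ℕ) : MvPolynomial (Fin n ⊕ Fin n) A :=
  if h : j < n then X (Sum.inr ⟨n - 1 - j, by omega⟩) else 0

theorem xSeq_val (A : Type*) [CommSemiring A] {n : ℕ} (m : Fin n) :
    xSeq A n m = X (Sum.inl m) := by
  simp [xSeq]

theorem ySeq_sub_val (A : Type*) [CommSemiring A] {n : ℕ} (m : Fin n) :
    ySeq A n (n - 1 - m) = X (Sum.inr m) := by
  have hlt : n - 1 - m.val < n := by omega
  have hrev : n - 1 - (n - 1 - m.val) = m.val := by omega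
  simp [ySeq, hlt, hrev]

variable {n}

theorem fX_succ {k : ℕ} (hk : k < n) :
    fX F n (k + 1) = orbitMap F (xSeq F n) k (xSeq F n k) := by
  have hlt (j : Fin k) : j.val < n := j.2.trans hk
  simp [fX, orbitMap_eq_prod, xSeq, hk, hlt, Nat.succ_le_of_lt hk, smul_eq_C_mul]

theorem fY_succ {k : ℕ} (hk : k < n) :
    fY F n (k + 1) = orbitMap F (ySeq F n) k (ySeq F n k) := by
  have hlt (j : Fin k) : j.val < n := j.2.trans hk
  simp [fY, orbitMap_eq_prod, ySeq, hk, hlt, Nat.succ_le_of_lt hk, smul_eq_C_mul, Nat.sub_sub,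
    Nat.add_comm 1]

theorem cX_eq_dicksonCoeff {s : ℕ} (hs : s ≤ n) (t : ℕ) :
    cX F n s t =
      dicksonCoeff (Fintype.card F) (fun j => orbitMap F (xSeq F n) j (xSeq F n j)) s t := by
  rw [cX, if_pos hs]
  refine Finset.sum_congr rfl fun g _ => Finset.prod_congr rfl fun l _ => ?_
  rw [fX_succ F ((g l).2.trans_le hs)]

theorem cY_eq_dicksonCoeff {s : ℕ} (hs : s ≤ n) (t : ℕ) :
    cY F n s t =
      dicksonCoeff (Fintype.card F) (fun j => orbitMap F (ySeq F n) j (ySeq F n j)) s t := by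
  rw [cY, if_pos hs]
  refine Finset.sum_congr rfl fun g _ => Finset.prod_congr rfl fun l _ => ?_
  rw [fY_succ F ((g l).2.trans_le hs)]

variable (n) in
theorem uInv_sub_pow (i j : ℕ) :
    uInv F n ((i : ℤ) - (j : ℤ)) ^ (Fintype.card F ^ min i j) =
      ∑ m : Fin n, X (Sum.inl m) ^ Fintype.card F ^ i * X (Sum.inr m) ^ Fintype.card F ^ j := by
  rcases le_total j i with h | h
  · obtain ⟨d, rfl⟩ := Nat.exists_eq_add_of_le h
    simp [uInv, sum_pow_card_pow, mul_pow, ← pow_mul, ← pow_add, add_comm]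
  · obtain ⟨d, rfl⟩ := Nat.exists_eq_add_of_le h
    rcases d.eq_zero_or_pos with rfl | hd
    · simp [uInv, sum_pow_card_pow, mul_pow]
    · simp [uInv, sum_pow_card_pow, mul_pow, ← pow_mul, ← pow_add, add_comm, hd.ne']

end Coordinates

section Relation

variable {n}

theorem sum_cX_mul_pow {s : ℕ} (hs : s ≤ n) (p : MvPolynomial (Fin n ⊕ Fin n) F) :
    ∑ i ∈ Finset.range (s + 1), (-1) ^ i * cX F n s i * p ^ Fintype.card F ^ i =
      (-1) ^ s * orbitMap F (xSeq F n) s p := by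
  simp only [cX_eq_dicksonCoeff F hs, sum_dicksonCoeff_mul_pow]

theorem sum_cY_mul_pow {s : ℕ} (hs : s ≤ n) (p : MvPolynomial (Fin n ⊕ Fin n) F) :
    ∑ j ∈ Finset.range (s + 1), (-1) ^ j * cY F n s j * p ^ Fintype.card F ^ j =
      (-1) ^ s * orbitMap F (ySeq F n) s p := by
  simp only [cY_eq_dicksonCoeff F hs, sum_dicksonCoeff_mul_pow]

theorem sum_orbitMap_mul_orbitMap {a b : ℕ} (h : a + 1 + b = n) :
    ∑ m : Fin n, orbitMap F (xSeq F n) a (X (Sum.inl m)) *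
        orbitMap F (ySeq F n) b (X (Sum.inr m)) =
      fX F n (a + 1) * fY F n (b + 1) := by
  have ha : a < n := by omega
  have hb : n - 1 - a = b := by omega
  rw [fX_succ F ha, fY_succ F (by omega), Finset.sum_eq_single ⟨a, ha⟩]
  · rw [← xSeq_val, ← ySeq_sub_val, hb]
  · intro m _ hm
    rw [← xSeq_val, ← ySeq_sub_val]
    rcases lt_or_gt_of_ne (show m.val ≠ a from Fin.val_ne_of_ne hm) with hlt | hgt
    · rw [orbitMap_eq_zero F _ hlt, zero_mul]
    · have hlt : n - 1 - m.val < b := by omega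
      rw [orbitMap_eq_zero F _ hlt, mul_zero]
  · simp

theorem relation_Rk {a b : ℕ} (h : a + 1 + b = n) :
    ∑ i ∈ Finset.range (a + 1), ∑ j ∈ Finset.range (b + 1),
      (-1) ^ (i + j) * cX F n a i * cY F n b j *
        uInv F n ((i : ℤ) - (j : ℤ)) ^ (Fintype.card F ^ min i j) =
      (-1) ^ (a + b) * (fX F n (a + 1) * fY F n (b + 1)) := by
  calc
    _ = ∑ i ∈ Finset.range (a + 1), ∑ j ∈ Finset.range (b + 1), ∑ m : Fin n,
          ((-1) ^ i * cX F n a i * X (Sum.inl m) ^ Fintype.card F ^ i) *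
            ((-1) ^ j * cY F n b j * X (Sum.inr m) ^ Fintype.card F ^ j) := by
        refine Finset.sum_congr rfl fun i _ => Finset.sum_congr rfl fun j _ => ?_
        rw [uInv_sub_pow, Finset.mul_sum]
        exact Finset.sum_congr rfl fun m _ => by ring
    _ = ∑ m : Fin n,
          (∑ i ∈ Finset.range (a + 1),
            (-1) ^ i * cX F n a i * X (Sum.inl m) ^ Fintype.card F ^ i) *
          ∑ j ∈ Finset.range (b + 1),
            (-1) ^ j * cY F n b j * X (Sum.inr m) ^ Fintype.card F ^ j := by
        simp only [Finset.sum_mul_sum]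
        rw [Finset.sum_comm (s := Finset.univ)]
        exact Finset.sum_congr rfl fun i _ => Finset.sum_comm
    _ = (-1) ^ (a + b) * (fX F n (a + 1) * fY F n (b + 1)) := by
        simp only [sum_cX_mul_pow F (show a ≤ n by omega), sum_cY_mul_pow F (show b ≤ n by omega),
          mul_mul_mul_comm _ (orbitMap F _ a _), ← pow_add, ← Finset.mul_sum,
          sum_orbitMap_mul_orbitMap F h]

end Relation

/-- Relation `R̃_k`. -/
theorem relation_Rk_tilde (k : ℕ) (hk1 : 1 ≤ k) (hk2 : k ≤ n) :
    (∑ i ∈ Finset.range k, ∑ j ∈ Finset.range (n - k + 1),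
      (-1 : MvPolynomial (Fin n ⊕ Fin n) F) ^ (i + j) *
        cX F n (k - 1) i * cY F n (n - k) j *
        uInv F n ((i : ℤ) - (j : ℤ)) ^ (Fintype.card F ^ min i j)) ^ (Fintype.card F - 1)
    = fX F n k ^ (Fintype.card F - 1) * fY F n (n + 1 - k) ^ (Fintype.card F - 1) := by
  obtain ⟨a, rfl⟩ := Nat.exists_eq_add_of_le' hk1
  obtain ⟨b, rfl⟩ := Nat.exists_eq_add_of_le hk2
  have hb : a + 1 + b + 1 - (a + 1) = b + 1 := by omega
  rw [Nat.add_sub_cancel, Nat.add_sub_cancel_left, hb, relation_Rk F rfl, mul_pow, mul_pow,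
    pow_right_comm, neg_one_pow_card_sub_one, one_pow, one_mul]
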